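/- Suppose m = ρ·l·(l−1) for an integer ρ ≥ 1. Then for every degree d > 2m: v_d(I^{(m)}) = 1 if d = jm + w(l−1) + (l−1) for some integers j with 2 ≤ j ≤ l−1 and w with 0 ≤ w ≤ ρl − 1, and v_d(I^{(m)}) = 0 otherwise. In particular, v_d(I^{(m)}) = 0 for all d > lm and v_{lm}(I^{(m)}) = 1. -/

import Mathlib

open MvPolynomial Filter

/-- The degree-`d` homogeneous component of a homogeneous ideal `J ⊆ K[x,y,z]`,
as a `K`-vector subspace. -/
noncomputable def degComp {K : Type*} [Field K] (J : Ideal (MvPolynomial (Fin 3) K)) (d : ℕ) :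
    Submodule K (MvPolynomial (Fin 3) K) :=
  Submodule.restrictScalars K J ⊓ homogeneousSubmodule (Fin 3) K d

/-- `dim_K J_d`. -/
noncomputable def hdim {K : Type*} [Field K] (J : Ideal (MvPolynomial (Fin 3) K)) (d : ℕ) : ℕ :=
  Module.finrank K (degComp J d)

/-- The subspace `R_1 · J_{d-1}` of products of linear forms with degree-`(d-1)` elements. -/
noncomputable def oneGen {K : Type*} [Field K] (J : Ideal (MvPolynomial (Fin 3) K)) (d : ℕ) :
    Submodule K (MvPolynomial (Fin 3) K) :=
  Submodule.span K
    {x | ∃ f ∈ homogeneousSubmodule (Fin 3) K 1, ∃ g ∈ degComp J (d - 1), x = f * g}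

/-- `v_d(J) = dim_K J_d / (R_1 · J_{d-1})`, the number of minimal generators of `J`
in degree `d`. -/
noncomputable def vnum {K : Type*} [Field K] (J : Ideal (MvPolynomial (Fin 3) K)) (d : ℕ) : ℕ :=
  Module.finrank K
    (↥(degComp J d) ⧸ Submodule.comap (degComp J d).subtype (oneGen J d))

/-!
Choose coordinates in which the line is `z = 0` and the point off the line is `(1 : 0 : 0)`. Then
`I^{(m)} = (z, Q)^m ∩ (x, y)^m`, where `Q` is the product of `l` distinct linear forms in `x, y`, so
`I^{(m)}` is spanned by the elements `z^k H(x, y)` with `Q^{m-k} ∣ H` and `m ≤ deg H`. In degree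
`d > 2 m` such an element lies in `R_1 I^{(m)}`, unless it is a scalar multiple of `z^k Q^t` with
`k + t = m`, and these forms are minimal generators. Their degrees `k + l t = m + (l - 1) t` are
pairwise distinct.
-/

theorem exists_isHomogeneous_mul_eq_of_dvd {σ R : Type*} [CommRing R] [IsDomain R]
    {A H : MvPolynomial σ R} {a n : ℕ} (hA : A.IsHomogeneous a) (hH : H.IsHomogeneous n)
    (hdvd : A ∣ H) (h0 : H ≠ 0) :
    ∃ e, ∃ B : MvPolynomial σ R, B.IsHomogeneous e ∧ a + e = n ∧ A * B = H := by
  obtain ⟨B, rfl⟩ := hdvd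
  have hA0 := left_ne_zero_of_mul h0
  have han : a ≤ n := by
    have hdeg := totalDegree_mul_of_isDomain hA0 (right_ne_zero_of_mul h0)
    rw [hH.totalDegree h0, hA.totalDegree hA0] at hdeg
    exact hdeg ▸ Nat.le_add_right _ _
  let _ := gradedAlgebra (σ := σ) (R := R)
  have hcomp := DirectSum.coe_decompose_mul_of_left_mem_of_le
    (homogeneousSubmodule σ R) (b := B) hA han
  rw [DirectSum.decompose_of_mem_same _ hH] at hcomp
  exact ⟨n - a, _, (mem_homogeneousSubmodule _ _).1 (SetLike.coe_mem _),
    Nat.add_sub_cancel' han, hcomp.symm⟩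

theorem isHomogeneous_mem_pow_idealOfVars_iff {σ R : Type*} [CommSemiring R]
    {G : MvPolynomial σ R} {m n : ℕ} (hG : G.IsHomogeneous n) (h0 : G ≠ 0) :
    G ∈ idealOfVars σ R ^ m ↔ m ≤ n := by
  have hdeg : ∀ s ∈ G.support, s.degree = n := fun s hs =>
    (hG.degree_eq_sum_deg_support hs).symm
  rw [mem_pow_idealOfVars_iff]
  refine ⟨fun h => ?_, fun h s hs => h.trans (hdeg s hs).ge⟩
  obtain ⟨s, hs⟩ := support_nonempty.2 h0
  exact (h s hs).trans (hdeg s hs).le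

theorem isRelPrime_X {σ R : Type*} [CommRing R] [IsDomain R] {i j : σ} (h : i ≠ j) :
    IsRelPrime (X i : MvPolynomial σ R) (X j) := by
  rw [X_prime.irreducible.isRelPrime_iff_not_dvd, X_dvd_X]
  simpa using h

theorem pow_dvd_coeff_of_mem_span_X_C_pow {S : Type*} [CommSemiring S] {t : S} {m : ℕ}
    {F : Polynomial S} (hF : F ∈ Ideal.span {Polynomial.X, Polynomial.C t} ^ m) (k : ℕ) :
    t ^ (m - k) ∣ F.coeff k := by
  induction m generalizing F k with
  | zero => simp
  | succ m ih =>
    rw [pow_succ] at hF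
    refine Submodule.mul_induction_on hF (fun A hA B hB => ?_) fun A B hA hB => ?_
    · obtain ⟨u, v, rfl⟩ := Ideal.mem_span_pair.1 hB
      rw [mul_add, ← mul_assoc, ← mul_assoc, Polynomial.coeff_add, Polynomial.coeff_mul_C]
      refine dvd_add ?_ ?_
      · cases k with
        | zero => simp
        | succ k => simpa using ih (Ideal.mul_mem_right u _ hA) k
      · have hdvd := mul_dvd_mul_right (ih (Ideal.mul_mem_right v _ hA) k) t
        rw [← pow_succ] at hdvd
        exact (pow_dvd_pow t (by omega)).trans hdvd
    · rw [Polynomial.coeff_add]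
      exact dvd_add hA hB

theorem mem_span_X_C_pow_iff {S : Type*} [CommSemiring S] {t : S} {m : ℕ} {F : Polynomial S} :
    F ∈ Ideal.span {Polynomial.X, Polynomial.C t} ^ m ↔ ∀ k, t ^ (m - k) ∣ F.coeff k := by
  refine ⟨pow_dvd_coeff_of_mem_span_X_C_pow, fun h => ?_⟩
  rw [F.as_sum_support_C_mul_X_pow]
  refine Ideal.sum_mem _ fun k _ => ?_
  obtain ⟨G, hG⟩ := h k
  set I : Ideal (Polynomial S) := Ideal.span {Polynomial.X, Polynomial.C t}
  have hmem : Polynomial.C t ^ (m - k) * Polynomial.X ^ k ∈ I ^ (m - k + k) :=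
    pow_add I _ _ ▸ Ideal.mul_mem_mul
      (Ideal.pow_mem_pow (Ideal.mem_span_pair.2 ⟨0, 1, by simp⟩) _)
      (Ideal.pow_mem_pow (Ideal.mem_span_pair.2 ⟨1, 0, by simp⟩) _)
  rw [hG, Polynomial.C_mul, Polynomial.C_pow, mul_right_comm]
  exact Ideal.mul_mem_right _ _ (Ideal.pow_le_pow_right (by omega) hmem)

theorem iInf_span_X_C_pow {S ι : Type*} [CommSemiring S] [DecompositionMonoid S] [Fintype ι]
    {f : ι → S} (hf : Pairwise (Function.onFun IsRelPrime f)) (m : ℕ) :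
    ⨅ i, Ideal.span {Polynomial.X, Polynomial.C (f i)} ^ m =
      Ideal.span {Polynomial.X, Polynomial.C (∏ i, f i)} ^ m := by
  ext F
  simp only [Ideal.mem_iInf, mem_span_X_C_pow_iff, ← Finset.prod_pow]
  rw [forall_comm]
  refine forall_congr' fun k => ⟨fun h => ?_, fun h i => ?_⟩
  · exact Fintype.prod_dvd_of_isRelPrime (fun i j hij => (hf hij).pow) h
  · exact (Finset.dvd_prod_of_mem _ (Finset.mem_univ i)).trans (h)

section FinSuccEquiv

variable {R : Type*} [CommSemiring R] {n : ℕ}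

theorem finSuccEquiv_X_zero_pow_mul_rename_succ (k : ℕ) (G : MvPolynomial (Fin n) R) :
    finSuccEquiv R n (X 0 ^ k * rename Fin.succ G) = Polynomial.monomial k G := by
  have hren : finSuccEquiv R n (rename Fin.succ G) = Polynomial.C G := by
    induction G using MvPolynomial.induction_on with
    | C a => simp [finSuccEquiv_apply]
    | add p q hp hq => simp only [map_add, hp, hq]
    | mul_X p i hp => simp only [map_mul, hp, rename_X, finSuccEquiv_X_succ]
  rw [map_mul, map_pow, finSuccEquiv_X_zero, hren, mul_comm, Polynomial.C_mul_X_pow_eq_monomial]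

theorem sum_X_zero_pow_mul_rename_succ_coeff (F : MvPolynomial (Fin (n + 1)) R) :
    ∑ k ∈ (finSuccEquiv R n F).support,
      X 0 ^ k * rename Fin.succ ((finSuccEquiv R n F).coeff k) = F := by
  apply (finSuccEquiv R n).injective
  simp only [map_sum, finSuccEquiv_X_zero_pow_mul_rename_succ]
  exact (Polynomial.as_sum_support _).symm

theorem exists_isHomogeneous_coeff_finSuccEquiv {F : MvPolynomial (Fin (n + 1)) R} {d k : ℕ}
    (hF : F.IsHomogeneous d) (hk : (finSuccEquiv R n F).coeff k ≠ 0) :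
    ∃ e, ((finSuccEquiv R n F).coeff k).IsHomogeneous e ∧ k + e = d := by
  have hkd := (totalDegree_coeff_finSuccEquiv_add_le F k hk).trans hF.totalDegree_le
  exact ⟨d - k, hF.finSuccEquiv_coeff_isHomogeneous k (d - k) (by omega), by omega⟩

end FinSuccEquiv

theorem map_homogeneousSubmodule {σ R : Type*} [CommSemiring R]
    (e : MvPolynomial σ R ≃ₐ[R] MvPolynomial σ R)
    (he : ∀ F n, (e F).IsHomogeneous n ↔ F.IsHomogeneous n) (n : ℕ) :
    (homogeneousSubmodule σ R n).map e.toLinearMap = homogeneousSubmodule σ R n := by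
  ext F
  obtain ⟨G, rfl⟩ := e.surjective F
  simp only [Submodule.mem_map, AlgEquiv.toLinearMap_apply, e.injective.eq_iff, exists_eq_right,
    mem_homogeneousSubmodule, he]

section MinimalGenerators

variable {K : Type*} [Field K] {J : Ideal (MvPolynomial (Fin 3) K)} {d : ℕ}

theorem mul_mem_oneGen {f g : MvPolynomial (Fin 3) K} (hf : f.IsHomogeneous 1)
    (hg : g ∈ degComp J d) : f * g ∈ oneGen J (d + 1) :=
  Submodule.subset_span ⟨f, hf, g, by simpa only [Nat.add_sub_cancel] using hg, rfl⟩

theorem oneGen_eq_mul (J : Ideal (MvPolynomial (Fin 3) K)) (d : ℕ) :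
    oneGen J d = homogeneousSubmodule (Fin 3) K 1 * degComp J (d - 1) := by
  rw [Submodule.mul_eq_span_mul_set, oneGen]
  congr 1
  ext x
  simp only [Set.mem_ofPred_eq, Set.mem_mul, SetLike.mem_coe, eq_comm]

theorem vnum_eq_zero (h : degComp J d ≤ oneGen J d) : vnum J d = 0 := by
  rw [vnum, Submodule.comap_subtype_eq_top.2 h]
  exact Module.finrank_zero_of_subsingleton

theorem vnum_eq_one {g : MvPolynomial (Fin 3) K} (hg : g ∈ degComp J d) (hg' : g ∉ oneGen J d)
    (h : degComp J d ≤ oneGen J d ⊔ K ∙ g) : vnum J d = 1 := by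
  refine _root_.finrank_eq_one (Submodule.Quotient.mk ⟨g, hg⟩)
    (mt (Submodule.Quotient.mk_eq_zero _).1 hg') fun w => ?_
  obtain ⟨⟨F, hF⟩, rfl⟩ := Submodule.Quotient.mk_surjective _ w
  obtain ⟨y, hy, z, hz, hyz⟩ := Submodule.mem_sup.1 (h hF)
  obtain ⟨c, rfl⟩ := Submodule.mem_span_singleton.1 hz
  refine ⟨c, ((Submodule.Quotient.eq _).2 (Submodule.mem_comap.2 ?_)).symm⟩
  change F - c • g ∈ oneGen J d
  rwa [sub_eq_of_eq_add hyz.symm]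

variable (e : MvPolynomial (Fin 3) K ≃ₐ[K] MvPolynomial (Fin 3) K)
  (he : ∀ F n, (e F).IsHomogeneous n ↔ F.IsHomogeneous n)

include he

theorem map_degComp_comap (J : Ideal (MvPolynomial (Fin 3) K)) (d : ℕ) :
    (degComp (J.comap e) d).map e.toLinearMap = degComp J d := by
  ext F
  obtain ⟨G, rfl⟩ := e.surjective F
  simp only [Submodule.mem_map, AlgEquiv.toLinearMap_apply, e.injective.eq_iff, exists_eq_right,
    degComp, Submodule.mem_inf, Submodule.restrictScalars_mem, Ideal.mem_comap,
    mem_homogeneousSubmodule, he]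

theorem map_oneGen_comap (J : Ideal (MvPolynomial (Fin 3) K)) (d : ℕ) :
    (oneGen (J.comap e) d).map e.toLinearMap = oneGen J d := by
  have hmul := Submodule.map_mul (homogeneousSubmodule (Fin 3) K 1)
    (degComp (J.comap e) (d - 1)) e.toAlgHom
  rw [oneGen_eq_mul, oneGen_eq_mul, ← map_degComp_comap e he J]
  exact hmul.trans (congrArg (· * _) (map_homogeneousSubmodule e he 1))

theorem vnum_comap (J : Ideal (MvPolynomial (Fin 3) K)) (d : ℕ) :
    vnum (J.comap e) d = vnum J d := by
  let f : degComp (J.comap e) d ≃ₗ[K] degComp J d :=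
    (e.toLinearEquiv.submoduleMap _).trans (LinearEquiv.ofEq _ _ (map_degComp_comap e he J d))
  refine LinearEquiv.finrank_eq (Submodule.Quotient.equiv _ _ f ?_)
  ext F
  obtain ⟨G, rfl⟩ := f.surjective F
  rw [Submodule.mem_comap, ← map_oneGen_comap e he J d]
  have hf : (degComp J d).subtype (f G) = e G := rfl
  simp only [hf, Submodule.mem_map, AlgEquiv.toLinearMap_apply, e.injective.eq_iff,
    exists_eq_right, LinearEquiv.coe_coe, f.injective.eq_iff, Submodule.mem_comap,
    Submodule.subtype_apply]

end MinimalGenerators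

section FatIdeal

variable {K : Type*} [Field K] {Q : MvPolynomial (Fin 2) K} {l m d : ℕ}

/-- The ideal `(z, Q)^m ∩ (x, y)^m` of `K[z, x, y]`, for a polynomial `Q` in `x` and `y`. If `Q` is
a product of `l` distinct linear forms, this is the ideal of `m`-fold points at `l` points of the
line `z = 0` and at `(1 : 0 : 0)`. The variable `z` is `X 0`, singled out by `finSuccEquiv`. -/
noncomputable def fatIdeal (Q : MvPolynomial (Fin 2) K) (m : ℕ) :
    Ideal (MvPolynomial (Fin 3) K) :=
  (Ideal.span {Polynomial.X, Polynomial.C Q} ^ m ⊓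
    (idealOfVars (Fin 2) K).map Polynomial.C ^ m).comap (finSuccEquiv K 2)

theorem mem_fatIdeal_iff {F : MvPolynomial (Fin 3) K} :
    F ∈ fatIdeal Q m ↔ ∀ k, Q ^ (m - k) ∣ (finSuccEquiv K 2 F).coeff k ∧
      (finSuccEquiv K 2 F).coeff k ∈ idealOfVars (Fin 2) K ^ m := by
  rw [fatIdeal, Ideal.mem_comap, Submodule.mem_inf, mem_span_X_C_pow_iff, ← Ideal.map_pow,
    Ideal.mem_map_C_iff, forall_and]

theorem X_zero_pow_mul_rename_mem_degComp {k n : ℕ} {H : MvPolynomial (Fin 2) K}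
    (hH : H.IsHomogeneous n) (hdvd : Q ^ (m - k) ∣ H) (hmn : m ≤ n) :
    X 0 ^ k * rename Fin.succ H ∈ degComp (fatIdeal Q m) (k + n) := by
  refine ⟨mem_fatIdeal_iff.2 fun i => ?_, ?_⟩
  · rw [finSuccEquiv_X_zero_pow_mul_rename_succ, Polynomial.coeff_monomial]
    split_ifs with hki
    · refine ⟨hki ▸ hdvd, ?_⟩
      by_cases h0 : H = 0
      · exact h0 ▸ zero_mem _
      · exact (isHomogeneous_mem_pow_idealOfVars_iff hH h0).2 hmn
    · exact ⟨dvd_zero _, zero_mem _⟩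
  · simpa using (isHomogeneous_X_pow 0 k).mul (hH.rename_isHomogeneous (f := Fin.succ))

theorem X_zero_pow_succ_mul_rename_mem_oneGen {k n : ℕ} {H : MvPolynomial (Fin 2) K}
    (hH : H.IsHomogeneous n) (hmk : m ≤ k) (hmn : m ≤ n) :
    X 0 ^ (k + 1) * rename Fin.succ H ∈ oneGen (fatIdeal Q m) (k + n + 1) := by
  rw [pow_succ', mul_assoc]
  refine mul_mem_oneGen (isHomogeneous_X K 0) (X_zero_pow_mul_rename_mem_degComp hH ?_ hmn)
  simp [Nat.sub_eq_zero_of_le hmk]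

theorem X_zero_pow_mul_rename_mul_mem_oneGen {k n e : ℕ} {A G : MvPolynomial (Fin 2) K}
    (hA : A.IsHomogeneous n) (hdvd : Q ^ (m - k) ∣ A) (hG : G.IsHomogeneous (e + 1))
    (hm : m ≤ n + e) :
    X 0 ^ k * rename Fin.succ (A * G) ∈ oneGen (fatIdeal Q m) (k + (n + e) + 1) := by
  rw [← mem_homogeneousSubmodule, ← homogeneousSubmodule_one_pow, pow_succ',
    homogeneousSubmodule_one_pow] at hG
  refine Submodule.mul_induction_on hG (fun u hu v hv => ?_) fun u v hu hv => ?_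
  · have hmem := mul_mem_oneGen
      (((mem_homogeneousSubmodule _ _).1 hu).rename_isHomogeneous (f := Fin.succ))
      (X_zero_pow_mul_rename_mem_degComp (k := k) (hA.mul hv) (hdvd.mul_right v) hm)
    convert hmem using 1
    simp only [map_mul]
    ring
  · rw [mul_add, map_add, mul_add]
    exact add_mem hu hv

theorem X_zero_pow_mul_rename_mem_oneGen_sup {k n : ℕ} {H : MvPolynomial (Fin 2) K}
    (hQ : Q.IsHomogeneous l) (hH : H.IsHomogeneous n) (h0 : H ≠ 0)
    (hdvd : Q ^ (m - k) ∣ H) (hmn : m ≤ n) (hd : 2 * m < k + n) :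
    X 0 ^ k * rename Fin.succ H ∈ oneGen (fatIdeal Q m) (k + n) ⊔
      Submodule.span K {g | ∃ i t, i + t = m ∧ i + l * t = k + n ∧
        g = X 0 ^ i * rename Fin.succ (Q ^ t)} := by
  rcases lt_or_ge m k with hk | hk
  · obtain ⟨i, rfl⟩ := Nat.exists_eq_add_of_lt hk
    rw [add_right_comm]
    exact Submodule.mem_sup_left
      (X_zero_pow_succ_mul_rename_mem_oneGen hH (Nat.le_add_right m i) hmn)
  · obtain ⟨e, B, hB, rfl, rfl⟩ := exists_isHomogeneous_mul_eq_of_dvd (hQ.pow (m - k)) hH hdvd h0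
    cases e with
    | zero =>
      rw [← totalDegree_zero_iff_isHomogeneous, totalDegree_eq_zero_iff_eq_C] at hB
      refine Submodule.mem_sup_right ?_
      rw [hB, mul_comm (Q ^ _), C_mul', map_smul, mul_smul_comm]
      exact Submodule.smul_mem _ _ (Submodule.subset_span
        ⟨k, m - k, by omega, by omega, rfl⟩)
    | succ e =>
      exact Submodule.mem_sup_left
        (X_zero_pow_mul_rename_mul_mem_oneGen (hQ.pow _) dvd_rfl hB (by omega))

theorem degComp_fatIdeal_le (hQ : Q.IsHomogeneous l) (hd : 2 * m < d) :
    degComp (fatIdeal Q m) d ≤ oneGen (fatIdeal Q m) d ⊔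
      Submodule.span K {g | ∃ i t, i + t = m ∧ i + l * t = d ∧
        g = X 0 ^ i * rename Fin.succ (Q ^ t)} := by
  rintro F ⟨hF, hFd⟩
  rw [← sum_X_zero_pow_mul_rename_succ_coeff F]
  refine Submodule.sum_mem _ fun k hk => ?_
  have hk0 := Polynomial.mem_support_iff.1 hk
  obtain ⟨n, hn, rfl⟩ := exists_isHomogeneous_coeff_finSuccEquiv hFd hk0
  obtain ⟨hdvd, hmem⟩ := mem_fatIdeal_iff.1 hF k
  exact X_zero_pow_mul_rename_mem_oneGen_sup hQ hn hk0 hdvd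
    ((isHomogeneous_mem_pow_idealOfVars_iff hn hk0).1 hmem) hd

theorem coeff_finSuccEquiv_eq_zero_of_mem_degComp {F : MvPolynomial (Fin 3) K} {j : ℕ}
    (hQ : Q.IsHomogeneous l) (hF : F ∈ degComp (fatIdeal Q m) d) (hd : d < j + l * (m - j)) :
    (finSuccEquiv K 2 F).coeff j = 0 := by
  by_contra h0
  obtain ⟨n, hn, rfl⟩ := exists_isHomogeneous_coeff_finSuccEquiv hF.2 h0
  obtain ⟨e, B, -, rfl, -⟩ := exists_isHomogeneous_mul_eq_of_dvd (hQ.pow (m - j)) hn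
    (mem_fatIdeal_iff.1 hF.1 j).1 h0
  omega

theorem coeff_finSuccEquiv_eq_zero_of_mem_oneGen {F : MvPolynomial (Fin 3) K} {k t : ℕ}
    (hQ : Q.IsHomogeneous l) (hl : 1 ≤ l) (hkt : k + t = m) (hd : k + l * t = d) (hd0 : 0 < d)
    (hF : F ∈ oneGen (fatIdeal Q m) d) :
    (finSuccEquiv K 2 F).coeff k = 0 := by
  induction hF using Submodule.span_induction with
  | mem F hF =>
    obtain ⟨f, -, g, hg, rfl⟩ := hF
    rw [map_mul, Polynomial.coeff_mul]
    refine Finset.sum_eq_zero fun ij hij => mul_eq_zero_of_right _ ?_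
    obtain ⟨s, hs⟩ := Nat.exists_eq_add_of_le (Finset.HasAntidiagonal.antidiagonal.snd_le hij)
    refine coeff_finSuccEquiv_eq_zero_of_mem_degComp hQ hg ?_
    have hst : m - ij.2 = s + t := by omega
    have hls : s ≤ l * s := Nat.le_mul_of_pos_left s hl
    rw [hst, mul_add]
    omega
  | zero => simp
  | add F G _ _ hF hG => simp only [map_add, Polynomial.coeff_add, hF, hG, add_zero]
  | smul c F _ hF => simp [hF]

theorem X_zero_pow_mul_rename_notMem_oneGen {k t : ℕ} (hQ : Q.IsHomogeneous l) (hQ0 : Q ≠ 0)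
    (hl : 1 ≤ l) (hkt : k + t = m) (hd : k + l * t = d) (hd0 : 0 < d) :
    X 0 ^ k * rename Fin.succ (Q ^ t) ∉ oneGen (fatIdeal Q m) d := by
  intro h
  have hcoeff := coeff_finSuccEquiv_eq_zero_of_mem_oneGen hQ hl hkt hd hd0 h
  rw [finSuccEquiv_X_zero_pow_mul_rename_succ, Polynomial.coeff_monomial_same] at hcoeff
  exact pow_ne_zero t hQ0 hcoeff

theorem vnum_fatIdeal_eq_one (hQ : Q.IsHomogeneous l) (hQ0 : Q ≠ 0) (hd : 2 * m < d)
    (h : ∃ k t, k + t = m ∧ k + l * t = d) : vnum (fatIdeal Q m) d = 1 := by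
  obtain ⟨k, t, hkt, hdkt⟩ := h
  have hl : 2 ≤ l := by
    by_contra! hl
    have hlt := Nat.mul_le_mul_right t (Nat.le_of_lt_succ hl)
    omega
  have hmem : X 0 ^ k * rename Fin.succ (Q ^ t) ∈ degComp (fatIdeal Q m) d := by
    rw [← hdkt]
    exact X_zero_pow_mul_rename_mem_degComp (hQ.pow t) (by rw [← hkt, Nat.add_sub_cancel_left])
      (by omega)
  refine vnum_eq_one hmem
    (X_zero_pow_mul_rename_notMem_oneGen hQ hQ0 (by omega) hkt hdkt (by omega))
    ((degComp_fatIdeal_le hQ hd).trans (sup_le_sup_left (Submodule.span_mono ?_) _))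
  rintro g ⟨i, s, his, hdis, rfl⟩
  have hst : s = t := by
    have hls : (l - 1) * s = (l - 1) * t := by
      zify [show 1 ≤ l by omega]
      linarith
    exact Nat.eq_of_mul_eq_mul_left (by omega) hls
  obtain rfl : i = k := by omega
  rw [hst, Set.mem_singleton_iff]

theorem vnum_fatIdeal_eq_zero (hQ : Q.IsHomogeneous l) (hd : 2 * m < d)
    (h : ¬∃ k t, k + t = m ∧ k + l * t = d) : vnum (fatIdeal Q m) d = 0 := by
  refine vnum_eq_zero ((degComp_fatIdeal_le hQ hd).trans (sup_le le_rfl ?_))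
  refine Submodule.span_le.2 ?_
  rintro g ⟨k, t, hkt, hdkt, -⟩
  exact (h ⟨k, t, hkt, hdkt⟩).elim

theorem vnum_fatIdeal_eq_zero_of_mul_lt (hQ : Q.IsHomogeneous l) (hl : 2 ≤ l) (hd : l * m < d) :
    vnum (fatIdeal Q m) d = 0 := by
  refine vnum_fatIdeal_eq_zero hQ ((Nat.mul_le_mul_right m hl).trans_lt hd) ?_
  rintro ⟨k, t, rfl, rfl⟩
  have hk : k ≤ l * k := Nat.le_mul_of_pos_left k (by omega)
  rw [mul_add] at hd
  omega

theorem vnum_fatIdeal_mul (hQ : Q.IsHomogeneous l) (hQ0 : Q ≠ 0) (hl : 2 < l) (hm : 0 < m) :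
    vnum (fatIdeal Q m) (l * m) = 1 :=
  vnum_fatIdeal_eq_one hQ hQ0 (Nat.mul_lt_mul_of_pos_right hl hm) ⟨0, m, zero_add m, zero_add _⟩

end FatIdeal

section PointIdeal

variable {σ R : Type*} [CommRing R]

/-- The ideal of polynomials vanishing on the line through the origin spanned by `q`: those `F` with
`F (q T) = 0` in `R[T]`. For `q ≠ 0` over a field this is the homogeneous prime ideal of the
projective point `[q]`, also when the field is finite, where vanishing at all multiples of `q` would
be a weaker condition. -/
noncomputable def pointIdeal (q : σ → R) : Ideal (MvPolynomial σ R) :=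
  RingHom.ker (aeval fun j => Polynomial.C (q j) * Polynomial.X :
    MvPolynomial σ R →ₐ[R] Polynomial R)

theorem coeff_aeval_C_mul_X (q : σ → R) (F : MvPolynomial σ R) (n : ℕ) :
    (aeval (fun j => Polynomial.C (q j) * Polynomial.X) F : Polynomial R).coeff n =
      eval q (homogeneousComponent n F) := by
  induction F using MvPolynomial.induction_on' with
  | monomial s a =>
    have haeval : (aeval (fun j => Polynomial.C (q j) * Polynomial.X) (monomial s a) :
        Polynomial R) = Polynomial.monomial s.degree (eval q (monomial s a)) := by
      rw [aeval_monomial, eval_monomial, ← Polynomial.C_mul_X_pow_eq_monomial, Polynomial.C_mul,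
        mul_assoc, Polynomial.algebraMap_eq]
      simp only [Finsupp.prod, Finsupp.degree_apply, mul_pow, Finset.prod_mul_distrib,
        Finset.prod_pow_eq_pow_sum, map_prod, map_pow]
    rw [haeval, Polynomial.coeff_monomial,
      homogeneousComponent_of_mem (isHomogeneous_monomial a rfl), apply_ite (eval q), map_zero]
    exact if_congr eq_comm rfl rfl
  | add F G hF hG => simp only [map_add, Polynomial.coeff_add, hF, hG]

theorem mem_pointIdeal_iff {q : σ → R} {F : MvPolynomial σ R} :
    F ∈ pointIdeal q ↔ ∀ n, eval q (homogeneousComponent n F) = 0 := by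
  rw [pointIdeal, RingHom.mem_ker, Polynomial.ext_iff]
  simp only [← coeff_aeval_C_mul_X, Polynomial.coeff_zero]

-- Modulo `I`, every `F` is congruent to `F (q s)`.
theorem pointIdeal_le_of_forall_X_sub_mem {q : σ → R} {I : Ideal (MvPolynomial σ R)}
    (s : MvPolynomial σ R) (h : ∀ j, X j - C (q j) * s ∈ I) : pointIdeal q ≤ I := by
  intro F hF
  have hmk : Ideal.Quotient.mkₐ R I = ((Ideal.Quotient.mkₐ R I).comp (Polynomial.aeval s)).comp
      (aeval fun j => Polynomial.C (q j) * Polynomial.X) := by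
    refine algHom_ext fun j => ?_
    simpa [← C_eq_algebraMap] using Ideal.Quotient.eq.2 (h j)
  have hF0 : aeval (fun j => Polynomial.C (q j) * Polynomial.X) F = (0 : Polynomial R) := hF
  have hFI := DFunLike.congr_fun hmk F
  rw [AlgHom.comp_apply, hF0, map_zero] at hFI
  exact Ideal.Quotient.eq_zero_iff_mem.1 hFI

theorem map_pointIdeal_single_zero (n : ℕ) :
    (pointIdeal (Pi.single 0 1 : Fin (n + 1) → R)).map (finSuccEquiv R n) =
      (idealOfVars (Fin n) R).map Polynomial.C := by
  refine le_antisymm (Ideal.map_le_iff_le_comap.2 ?_) (Ideal.map_le_iff_le_comap.2 ?_)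
  · refine pointIdeal_le_of_forall_X_sub_mem (X 0) fun j => ?_
    cases j using Fin.cases with
    | zero => simp
    | succ i =>
      simpa [Ideal.mem_comap, finSuccEquiv_X_succ] using
        Ideal.mem_map_of_mem Polynomial.C (Ideal.subset_span (Set.mem_range_self (f := X) i))
  · refine Ideal.span_le.2 ?_
    rintro _ ⟨i, rfl⟩
    rw [SetLike.mem_coe, Ideal.mem_comap, ← finSuccEquiv_X_succ]
    refine Ideal.mem_map_of_mem _ ?_
    simp [pointIdeal, RingHom.mem_ker]

theorem map_pointIdeal_zero_of_isCoprime {a b : R} (hab : IsCoprime a b) :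
    (pointIdeal ![0, a, b]).map (finSuccEquiv R 2) =
      Ideal.span {Polynomial.X, Polynomial.C (C b * X 0 - C a * X 1)} := by
  obtain ⟨c, d, hcd⟩ := hab
  have hX₀ : finSuccEquiv R 2 (X 0) = Polynomial.X := finSuccEquiv_X_zero
  have hX₁ : finSuccEquiv R 2 (X 1) = Polynomial.C (X 0) := finSuccEquiv_X_succ (j := 0)
  have hX₂ : finSuccEquiv R 2 (X 2) = Polynomial.C (X 1) := finSuccEquiv_X_succ (j := 1)
  have hC (r : R) : finSuccEquiv R 2 (C r) = Polynomial.C (C r) := (finSuccEquiv R 2).commutes r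
  refine le_antisymm (Ideal.map_le_iff_le_comap.2 ?_) (Ideal.span_le.2 ?_)
  · have hcd' : Polynomial.C (C c) * Polynomial.C (C a) + Polynomial.C (C d) * Polynomial.C (C b) =
        (1 : Polynomial (MvPolynomial (Fin 2) R)) := by
      simp only [← map_mul, ← map_add, hcd, map_one]
    refine pointIdeal_le_of_forall_X_sub_mem (C c * X 1 + C d * X 2) fun j => ?_
    rw [Ideal.mem_comap, Ideal.mem_span_pair]
    match j with
    | 0 => exact ⟨1, 0, by simp [hX₀]⟩
    | 1 =>
      refine ⟨0, Polynomial.C (C d), ?_⟩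
      simp only [Matrix.cons_val, map_sub, map_add, map_mul, hX₁, hX₂, hC]
      linear_combination Polynomial.C (X 0) * hcd'
    | 2 =>
      refine ⟨0, -Polynomial.C (C c), ?_⟩
      simp only [Matrix.cons_val, map_sub, map_add, map_mul, hX₁, hX₂, hC]
      linear_combination Polynomial.C (X 1) * hcd'
  · have hX₀mem : X 0 ∈ pointIdeal ![0, a, b] := by simp [pointIdeal, RingHom.mem_ker]
    have hlinmem : C b * X 1 - C a * X 2 ∈ pointIdeal ![0, a, b] := by
      simp only [pointIdeal, RingHom.mem_ker, map_sub, map_mul, algHom_C, Polynomial.algebraMap_eq,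
        aeval_X, Matrix.cons_val]
      ring
    rintro _ (rfl | rfl)
    · exact hX₀ ▸ Ideal.mem_map_of_mem (finSuccEquiv R 2) hX₀mem
    · simpa only [map_sub, map_mul, hX₁, hX₂, hC, SetLike.mem_coe] using
        Ideal.mem_map_of_mem (finSuccEquiv R 2) hlinmem

end PointIdeal

theorem comap_pow_of_bijective {A B F : Type*} [CommSemiring A] [CommSemiring B] [FunLike F A B]
    [RingHomClass F A B] {f : F} (hf : Function.Bijective f) (J : Ideal B) (m : ℕ) :
    (J ^ m).comap f = J.comap f ^ m := by
  rw [← Ideal.comap_map_of_bijective f hf (I := J.comap f ^ m), Ideal.map_pow,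
    Ideal.map_comap_of_surjective f hf.surjective]

section LinearSubst

variable {σ R : Type*} [CommRing R] [Fintype σ] [DecidableEq σ]

/-- The change of coordinates `F(x) ↦ F(M x)` of polynomials given by an invertible matrix `M`. -/
noncomputable def linearSubst (M : (Matrix σ σ R)ˣ) : MvPolynomial σ R ≃ₐ[R] MvPolynomial σ R :=
  AlgEquiv.ofAlgHom (bind₁ (M : Matrix σ σ R).toMvPolynomial)
    (bind₁ (↑M⁻¹ : Matrix σ σ R).toMvPolynomial)
    (algHom_ext fun i => by simp [← Matrix.toMvPolynomial_mul])
    (algHom_ext fun i => by simp [← Matrix.toMvPolynomial_mul])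

theorem isHomogeneous_linearSubst (M : (Matrix σ σ R)ˣ) (F : MvPolynomial σ R) (n : ℕ) :
    (linearSubst M F).IsHomogeneous n ↔ F.IsHomogeneous n := by
  have himp (N : (Matrix σ σ R)ˣ) {G : MvPolynomial σ R} (hG : G.IsHomogeneous n) :
      (linearSubst N G).IsHomogeneous n := by
    have hN := hG.aeval _ (Matrix.toMvPolynomial_isHomogeneous (N : Matrix σ σ R))
    rwa [one_mul] at hN
  exact ⟨fun h => (linearSubst M).symm_apply_apply F ▸ himp M⁻¹ h, himp M⟩

theorem comap_linearSubst_pointIdeal (M : (Matrix σ σ R)ˣ) (q : σ → R) :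
    (pointIdeal q).comap (linearSubst M) = pointIdeal ((M : Matrix σ σ R).mulVec q) := by
  have hcomp : (aeval fun j => Polynomial.C (q j) * Polynomial.X).comp
      (bind₁ (M : Matrix σ σ R).toMvPolynomial) =
      aeval fun i => Polynomial.C ((M : Matrix σ σ R).mulVec q i) * Polynomial.X := by
    refine algHom_ext fun i => ?_
    simp [Matrix.toMvPolynomial, Matrix.mulVec, dotProduct, aeval_monomial, Finset.sum_mul,
      mul_assoc]
  ext F
  exact Eq.congr_left (DFunLike.congr_fun hcomp F)

end LinearSubst

theorem isRelPrime_C_mul_X_sub_C_mul_X {K : Type*} [Field K] {a b c d : K} (h : a * d - b * c ≠ 0) :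
    IsRelPrime (C b * X 0 - C a * X 1 : MvPolynomial (Fin 2) K) (C d * X 0 - C c * X 1) := by
  intro t ht₁ ht₂
  have hdet : IsUnit (C (a * d - b * c) : MvPolynomial (Fin 2) K) := (h.isUnit).map C
  refine isRelPrime_X (R := K) (i := (0 : Fin 2)) (j := 1) (by decide) ?_ ?_
  · rw [← hdet.dvd_mul_left]
    convert dvd_sub (ht₂.mul_left (C a)) (ht₁.mul_left (C c)) using 1
    simp only [map_sub, map_mul]
    ring
  · rw [← hdet.dvd_mul_left]
    convert dvd_sub (ht₂.mul_left (C b)) (ht₁.mul_left (C d)) using 1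
    simp only [map_sub, map_mul]
    ring

theorem isHomogeneous_C_mul_X_sub_C_mul_X {σ R : Type*} [CommRing R] (a b : R) (i j : σ) :
    (C b * X i - C a * X j).IsHomogeneous 1 :=
  (isHomogeneous_C_mul_X b i).sub (isHomogeneous_C_mul_X a j)

theorem det_ne_zero_of_linearIndependent_mulVec {K : Type*} [Field K]
    {M : Matrix (Fin 3) (Fin 3) K} {a b c d : K}
    (h : LinearIndependent K ![M.mulVec ![0, a, b], M.mulVec ![0, c, d]]) :
    a * d - b * c ≠ 0 := by
  have hac : LinearIndependent K ![![a, b], ![c, d]] := by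
    rw [LinearIndependent.pair_iff] at h ⊢
    intro s t hst
    refine h s t ?_
    rw [← Matrix.mulVec_smul, ← Matrix.mulVec_smul, ← Matrix.mulVec_add]
    have hst0 : s • ![0, a, b] + t • ![0, c, d] = 0 := by
      simpa using hst
    rw [hst0, Matrix.mulVec_zero]
  rw [← Matrix.det_fin_two_of, ← isUnit_iff_ne_zero, ← Matrix.isUnit_iff_isUnit_det,
    ← Matrix.linearIndependent_rows_iff_isUnit]
  exact hac

section PointsOnLine

variable {K ι : Type*} [Field K] [Fintype ι] [Nontrivial ι]

theorem iInf_pointIdeal_pow_inf_eq_fatIdeal {a b : ι → K}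
    (hdet : Pairwise fun i j => a i * b j - b i * a j ≠ 0) (m : ℕ) :
    (⨅ i, pointIdeal ![0, a i, b i] ^ m) ⊓ pointIdeal (Pi.single 0 1) ^ m =
      fatIdeal (∏ i, (C (b i) * X 0 - C (a i) * X 1)) m := by
  have hbij := (finSuccEquiv K 2).bijective
  have hcomap (q : Fin 3 → K) : ((pointIdeal q).map (finSuccEquiv K 2) ^ m).comap
      (finSuccEquiv K 2) = pointIdeal q ^ m := by
    rw [comap_pow_of_bijective hbij, Ideal.comap_map_of_bijective _ hbij]
  have hcoprime (i : ι) : IsCoprime (a i) (b i) := by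
    obtain ⟨j, hj⟩ := exists_ne i
    refine ⟨(a i * b j - b i * a j)⁻¹ * b j, -((a i * b j - b i * a j)⁻¹ * a j), ?_⟩
    linear_combination inv_mul_cancel₀ (hdet hj.symm)
  rw [fatIdeal, Ideal.comap_inf, ← map_pointIdeal_single_zero, hcomap,
    ← iInf_span_X_C_pow fun i j hij => isRelPrime_C_mul_X_sub_C_mul_X (hdet hij), Ideal.comap_iInf]
  simp only [← map_pointIdeal_zero_of_isCoprime (hcoprime _), hcomap]

theorem exists_matrix_mulVec_eq_of_dotProduct_eq_zero {K ι : Type*} [Field K] [Nontrivial ι]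
    {p : ι → Fin 3 → K} {p₀ L : Fin 3 → K}
    (hp : Pairwise fun i j => LinearIndependent K ![p i, p j])
    (hon : ∀ i, L ⬝ᵥ p i = 0) (hoff : L ⬝ᵥ p₀ ≠ 0) :
    ∃ (M : (Matrix (Fin 3) (Fin 3) K)ˣ) (a b : ι → K),
      (M : Matrix (Fin 3) (Fin 3) K).mulVec (Pi.single 0 1) = p₀ ∧
      ∀ i, (M : Matrix (Fin 3) (Fin 3) K).mulVec ![0, a i, b i] = p i := by
  obtain ⟨i, j, hij⟩ := exists_pair_ne ι
  have hspan : p₀ ∉ Submodule.span K (Set.range ![p i, p j]) := by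
    rw [Matrix.range_cons_cons_empty, Submodule.mem_span_pair]
    rintro ⟨s, t, rfl⟩
    simp [hon] at hoff
  have hunit : IsUnit (Matrix.of ![p₀, p i, p j]) :=
    Matrix.linearIndependent_rows_iff_isUnit.1 (linearIndependent_finCons.2 ⟨hp hij, hspan⟩)
  obtain ⟨M, hM⟩ := (Matrix.isUnit_transpose _).2 hunit
  have hLM : Matrix.vecMul L (M : Matrix (Fin 3) (Fin 3) K) = Pi.single 0 (L ⬝ᵥ p₀) := by
    ext k
    rw [hM]
    fin_cases k <;> simp [Matrix.vecMul, Matrix.transpose, hon]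
  have hinv (k : ι) : (M : Matrix (Fin 3) (Fin 3) K).mulVec
      ((↑M⁻¹ : Matrix (Fin 3) (Fin 3) K).mulVec (p k)) = p k := by simp
  have hzero (k : ι) : (↑M⁻¹ : Matrix (Fin 3) (Fin 3) K).mulVec (p k) 0 = 0 := by
    have hk := hon k
    rw [← hinv k, Matrix.dotProduct_mulVec, hLM, single_dotProduct] at hk
    exact (mul_eq_zero.1 hk).resolve_left hoff
  refine ⟨M, fun k => (↑M⁻¹ : Matrix (Fin 3) (Fin 3) K).mulVec (p k) 1,
    fun k => (↑M⁻¹ : Matrix (Fin 3) (Fin 3) K).mulVec (p k) 2, ?_, fun k => ?_⟩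
  · rw [Matrix.mulVec_single_one, hM]
    rfl
  · refine Eq.trans ?_ (hinv k)
    congr 1
    ext c
    fin_cases c
    · exact (hzero k).symm
    · rfl
    · rfl

theorem exists_forall_vnum_eq_vnum_fatIdeal {p : ι → Fin 3 → K} {p₀ L : Fin 3 → K}
    (hp : Pairwise fun i j => LinearIndependent K ![p i, p j])
    (hon : ∀ i, L ⬝ᵥ p i = 0) (hoff : L ⬝ᵥ p₀ ≠ 0) :
    ∃ Q : MvPolynomial (Fin 2) K, Q.IsHomogeneous (Fintype.card ι) ∧ Q ≠ 0 ∧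
      ∀ m d,
      vnum ((⨅ i, pointIdeal (p i) ^ m) ⊓ pointIdeal p₀ ^ m) d = vnum (fatIdeal Q m) d := by
  obtain ⟨M, a, b, rfl, hM⟩ := exists_matrix_mulVec_eq_of_dotProduct_eq_zero hp hon hoff
  obtain rfl : p = fun i => (M : Matrix (Fin 3) (Fin 3) K).mulVec ![0, a i, b i] :=
    funext fun i => (hM i).symm
  have hdet : Pairwise fun i j => a i * b j - b i * a j ≠ 0 := fun i j hij =>
    det_ne_zero_of_linearIndependent_mulVec (hp hij)
  refine ⟨∏ i, (C (b i) * X 0 - C (a i) * X 1), ?_, ?_, fun m d => ?_⟩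
  · simpa using IsHomogeneous.prod Finset.univ _ (fun _ => 1) fun i _ =>
      isHomogeneous_C_mul_X_sub_C_mul_X (a i) (b i) (0 : Fin 2) 1
  · refine Finset.prod_ne_zero_iff.2 fun i _ h => ?_
    obtain ⟨j, hj⟩ := exists_ne i
    have hb : b i = 0 := by simpa using congrArg (eval ![1, 0]) h
    have ha : a i = 0 := by simpa using congrArg (eval ![0, 1]) h
    exact hdet hj.symm (by simp [ha, hb])
  · simp only [← comap_linearSubst_pointIdeal,
      ← comap_pow_of_bijective (linearSubst M).bijective, ← Ideal.comap_iInf, ← Ideal.comap_inf,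
      iInf_pointIdeal_pow_inf_eq_fatIdeal hdet, vnum_comap _ (isHomogeneous_linearSubst M)]

end PointsOnLine

section Degrees

variable {n r q d : ℕ}

theorem exists_add_eq_mul_and_add_succ_mul_eq_iff :
    (∃ k t, k + t = r * n ∧ k + (n + 1) * t = d) ↔ ∃ q, r ≤ q ∧ q ≤ r * (n + 1) ∧ d = n * q := by
  constructor
  · rintro ⟨k, t, hkt, rfl⟩
    refine ⟨r + t, Nat.le_add_right r t, by rw [mul_add_one]; omega, ?_⟩
    linear_combination hkt
  · rintro ⟨q, hrq, hq, rfl⟩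
    obtain ⟨t, rfl⟩ := Nat.exists_eq_add_of_le hrq
    obtain ⟨k, hk⟩ := Nat.exists_eq_add_of_le (show t ≤ r * n by rw [mul_add_one] at hq; omega)
    exact ⟨k, t, by rw [hk, add_comm], by linear_combination -hk⟩

theorem two_mul_lt_and_le_mul_succ_iff (hr : 0 < r) :
    2 * r < q ∧ q ≤ r * (n + 1) ↔
      ∃ j w, 2 ≤ j ∧ j ≤ n ∧ w < r ∧ q = j * r + w + 1 := by
  constructor
  · rintro ⟨h2, hn⟩
    refine ⟨(q - 1) / r, (q - 1) % r, (Nat.le_div_iff_mul_le hr).2 (by omega), ?_,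
      Nat.mod_lt _ hr, by rw [Nat.div_add_mod']; omega⟩
    rw [← Nat.lt_succ_iff, Nat.div_lt_iff_lt_mul hr, mul_comm]
    exact (Nat.sub_one_lt (by omega)).trans_le hn
  · rintro ⟨j, w, hj, hjn, hw, rfl⟩
    have h2 := Nat.mul_le_mul_right r hj
    have hn := Nat.mul_le_mul_right r hjn
    rw [mul_add_one, mul_comm r n]
    omega

-- Both sides say that `d = (l - 1) q` with `2 ρ l < q ≤ ρ l ^ 2`.
theorem exists_add_eq_and_add_mul_eq_iff_exists_degree {l ρ m : ℕ} (hl : 1 ≤ l) (hρ : 1 ≤ ρ)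
    (hm : m = ρ * l * (l - 1)) (hd : 2 * m < d) :
    (∃ k t, k + t = m ∧ k + l * t = d) ↔
      ∃ j w, 2 ≤ j ∧ j ≤ l - 1 ∧ w ≤ ρ * l - 1 ∧ d = j * m + w * (l - 1) + (l - 1) := by
  obtain ⟨n, rfl⟩ := Nat.exists_eq_add_of_le' hl
  have hr : 0 < ρ * (n + 1) := by positivity
  rw [Nat.add_sub_cancel] at *
  subst hm
  rw [exists_add_eq_mul_and_add_succ_mul_eq_iff]
  constructor
  · rintro ⟨q, -, hq, rfl⟩
    have h2 : 2 * (ρ * (n + 1)) < q :=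
      lt_of_mul_lt_mul_left (a := n) (by linarith) (Nat.zero_le n)
    obtain ⟨j, w, hj, hjn, hw, rfl⟩ := (two_mul_lt_and_le_mul_succ_iff hr).1 ⟨h2, hq⟩
    exact ⟨j, w, hj, hjn, Nat.le_sub_one_of_lt hw, by ring⟩
  · rintro ⟨j, w, hj, hjn, hw, rfl⟩
    obtain ⟨h2, hq⟩ := (two_mul_lt_and_le_mul_succ_iff hr).2 ⟨j, w, hj, hjn, by omega, rfl⟩
    exact ⟨_, by omega, hq, by ring⟩

end Degrees

theorem stmt_4_general
    (K : Type*) [Field K]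
    (l : ℕ) (hl : 2 < l)
    (p : Fin (l + 1) → Fin 3 → K) (hp0 : ∀ i, p i ≠ 0)
    (hdist : ∀ i j, i ≠ j → ∀ c : K, c • p i ≠ p j)
    (L : Fin 3 → K)
    (hon : ∀ i : Fin (l + 1), (i : ℕ) < l → ∑ j, L j * p i j = 0)
    (hoff : ∑ j, L j * p (Fin.last l) j ≠ 0)
    (P : Fin (l + 1) → Ideal (MvPolynomial (Fin 3) K))
    (hP : ∀ i F, F ∈ P i ↔ ∀ n, eval (p i) (homogeneousComponent n F) = 0)
    (ρ : ℕ) (hρ : 1 ≤ ρ) (m : ℕ) (hm : m = ρ * l * (l - 1))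
    (Im : Ideal (MvPolynomial (Fin 3) K)) (hIm : Im = ⨅ i, P i ^ m) :
    (∀ d : ℕ, 2 * m < d →
      ((∃ j w : ℕ, 2 ≤ j ∧ j ≤ l - 1 ∧ w ≤ ρ * l - 1 ∧
          d = j * m + w * (l - 1) + (l - 1)) →
        vnum Im d = 1) ∧
      (¬(∃ j w : ℕ, 2 ≤ j ∧ j ≤ l - 1 ∧ w ≤ ρ * l - 1 ∧
          d = j * m + w * (l - 1) + (l - 1)) →
        vnum Im d = 0)) ∧
    (∀ d : ℕ, l * m < d → vnum Im d = 0) ∧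
    vnum Im (l * m) = 1 := by
  obtain rfl : P = fun i => pointIdeal (p i) :=
    funext fun i => Ideal.ext fun F => (hP i F).trans mem_pointIdeal_iff.symm
  have hsplit : Im = (⨅ i : Fin l, pointIdeal (p i.castSucc) ^ m) ⊓
      pointIdeal (p (Fin.last l)) ^ m := by
    ext F
    simp only [hIm, Submodule.mem_inf, Ideal.mem_iInf, Fin.forall_fin_succ']
  have hnontriv : Nontrivial (Fin l) := Fin.nontrivial_iff_two_le.2 hl.le
  obtain ⟨Q, hQ, hQ0, hvnum⟩ := exists_forall_vnum_eq_vnum_fatIdeal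
    (fun i j hij => (LinearIndependent.pair_iff' (hp0 _)).2
      (hdist _ _ ((Fin.castSucc_injective l).ne hij)))
    (fun i => hon i.castSucc i.is_lt) hoff
  rw [Fintype.card_fin] at hQ
  have hm0 : 0 < m := hm ▸ Nat.mul_pos (by positivity) (by omega)
  simp only [hsplit, hvnum]
  refine ⟨fun d hd => ?_, fun d => vnum_fatIdeal_eq_zero_of_mul_lt hQ hl.le,
    vnum_fatIdeal_mul hQ hQ0 hl hm0⟩
  rw [← exists_add_eq_and_add_mul_eq_iff_exists_degree (by omega) hρ hm hd]
  exact ⟨vnum_fatIdeal_eq_one hQ hQ0 hd, vnum_fatIdeal_eq_zero hQ hd⟩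

theorem stmt_4
    (K : Type*) [Field K] [CharZero K]
    -- `l > 2` points on a line plus one point off the line
    (l : ℕ) (hl : 2 < l)
    (p : Fin (l + 1) → Fin 3 → K) (hp0 : ∀ i, p i ≠ 0)
    (hdist : ∀ i j, i ≠ j → ∀ c : K, c • p i ≠ p j)
    (L : Fin 3 → K) (hL : L ≠ 0)
    (hon : ∀ i : Fin (l + 1), (i : ℕ) < l → ∑ j, L j * p i j = 0)
    (hoff : ∑ j, L j * p (Fin.last l) j ≠ 0)
    -- `P i` is the homogeneous prime ideal of all forms vanishing at `p i`
    (P : Fin (l + 1) → Ideal (MvPolynomial (Fin 3) K))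
    (hP : ∀ i F, F ∈ P i ↔ ∀ n, eval (p i) (homogeneousComponent n F) = 0)
    -- `m = ρ·l·(l−1)` with `ρ ≥ 1`
    (ρ : ℕ) (hρ : 1 ≤ ρ) (m : ℕ) (hm : m = ρ * l * (l - 1))
    -- the uniform fat point ideal `I^{(m)} = P_1^m ∩ ⋯ ∩ P_{l+1}^m`
    (Im : Ideal (MvPolynomial (Fin 3) K)) (hIm : Im = ⨅ i, P i ^ m) :
    (∀ d : ℕ, 2 * m < d →
      ((∃ j w : ℕ, 2 ≤ j ∧ j ≤ l - 1 ∧ w ≤ ρ * l - 1 ∧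
          d = j * m + w * (l - 1) + (l - 1)) →
        vnum Im d = 1) ∧
      (¬(∃ j w : ℕ, 2 ≤ j ∧ j ≤ l - 1 ∧ w ≤ ρ * l - 1 ∧
          d = j * m + w * (l - 1) + (l - 1)) →
        vnum Im d = 0)) ∧
    (∀ d : ℕ, l * m < d → vnum Im d = 0) ∧
    vnum Im (l * m) = 1 :=
  stmt_4_general K l hl p hp0 hdist L hon hoff P hP ρ hρ m hm Im hIm
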